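/- Let σ > 0 and 0 < α < 1/2. Let p(x) = σ be the constant function and let f(x) = (σ/α)·max(0, x − (1 − 2α)) on [-1,1]; note that |p(x) − f(x)| ≤ σ for all x ∈ [-1,1]. Then every polynomial q of degree at most 1 that minimizes sup_{x∈[-1,1]} |f(x) − r(x)| over all degree-at-most-1 polynomials r satisfies sup_{x∈[-1,1]} |p(x) − q(x)| ≥ (2 − α)·σ. -/

import Mathlib

open Polynomial

/-- The sup-norm of `f` over `[-1, 1]`. -/
noncomputable def supNorm (f : ℝ → ℝ) : ℝ := ⨆ x : Set.Icc (-1 : ℝ) 1, |f x|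

/-!
The ramp `f` has a kink at `c = 1 - 2α` and passes through `(-1, 0)`, `(c, 0)` and `(1, 2σ)`. It
lies below the chord `σ(x + 1)` and above the parallel line `σ(x - c)`, so the line `σ(x + α)`
midway between them is within `(1 - α)σ` of `f`. Since `c = α·(-1) + (1 - α)·1`, being within
`(1 - α)σ` of `f` at `c` and at `1` forces any affine `q` down to `q(-1) ≤ -(1 - α)σ`, which is at
distance at least `(2 - α)σ` from `σ`.
-/

lemma abs_le_supNorm {f : ℝ → ℝ} (hf : ContinuousOn f (Set.Icc (-1) 1)) {x : ℝ}
    (hx : x ∈ Set.Icc (-1 : ℝ) 1) : |f x| ≤ supNorm f :=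
  le_ciSup (f := fun y : Set.Icc (-1 : ℝ) 1 => |f y|)
    (isCompact_range hf.domRestrict.abs).bddAbove ⟨x, hx⟩

lemma supNorm_le {f : ℝ → ℝ} {E : ℝ} (h : ∀ x ∈ Set.Icc (-1 : ℝ) 1, |f x| ≤ E) :
    supNorm f ≤ E :=
  have : Nonempty (Set.Icc (-1 : ℝ) 1) := ⟨0, by norm_num⟩
  ciSup_le fun x => h x x.2

lemma eval_convex_combo_of_natDegree_le_one {R : Type*} [CommSemiring R] {q : R[X]}
    (hq : q.natDegree ≤ 1) {s t : R} (hst : s + t = 1) (x y : R) :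
    q.eval (s * x + t * y) = s * q.eval x + t * q.eval y := by
  obtain ⟨a, b, rfl⟩ := exists_eq_X_add_C_of_natDegree_le_one hq
  simp only [eval_add, eval_mul, eval_C, eval_X]
  calc a * (s * x + t * y) + b = a * (s * x + t * y) + (s + t) * b := by rw [hst, one_mul]
    _ = s * (a * x + b) + t * (a * y + b) := by ring

/-- The function `f` of the theorem: zero up to the kink `1 - 2α`, then of slope `σ / α`. -/
noncomputable def ramp (σ α x : ℝ) : ℝ := σ / α * max 0 (x - (1 - 2 * α))

section ramp

variable {σ α : ℝ}

@[fun_prop]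
lemma continuous_ramp : Continuous (ramp σ α) := by
  unfold ramp
  fun_prop

lemma ramp_nonneg (hσ : 0 ≤ σ) (hα : 0 ≤ α) (x : ℝ) : 0 ≤ ramp σ α x :=
  mul_nonneg (div_nonneg hσ hα) (le_max_left _ _)

lemma ramp_kink : ramp σ α (1 - 2 * α) = 0 := by
  simp [ramp]

lemma ramp_one (hα : 0 < α) : ramp σ α 1 = 2 * σ := by
  rw [ramp, max_eq_right (by linarith)]
  field_simp
  ring

lemma ramp_le_chord (hσ : 0 ≤ σ) (hα : 0 < α) (hα1 : α ≤ 1) {x : ℝ}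
    (hx : x ∈ Set.Icc (-1 : ℝ) 1) : ramp σ α x ≤ σ * (x + 1) := by
  have hmax : max 0 (x - (1 - 2 * α)) ≤ α * (x + 1) :=
    max_le (mul_nonneg hα.le (by linarith [hx.1])) (by nlinarith [hx.2])
  calc ramp σ α x ≤ σ / α * (α * (x + 1)) :=
        mul_le_mul_of_nonneg_left hmax (div_nonneg hσ hα.le)
    _ = σ * (x + 1) := by field_simp

lemma mul_sub_kink_le_ramp (hσ : 0 ≤ σ) (hα : 0 < α) (hα1 : α ≤ 1) (x : ℝ) :
    σ * (x - (1 - 2 * α)) ≤ ramp σ α x :=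
  calc σ * (x - (1 - 2 * α)) ≤ σ * max 0 (x - (1 - 2 * α)) := by
        gcongr
        exact le_max_right _ _
    _ ≤ σ / α * max 0 (x - (1 - 2 * α)) := by
        gcongr
        exact le_div_self hσ hα hα1

lemma abs_const_sub_ramp_le (hσ : 0 ≤ σ) (hα : 0 < α) (hα1 : α ≤ 1) {x : ℝ}
    (hx : x ∈ Set.Icc (-1 : ℝ) 1) : |σ - ramp σ α x| ≤ σ := by
  have hle : ramp σ α x ≤ σ * (1 + 1) :=
    (ramp_le_chord hσ hα hα1 hx).trans (by gcongr; exact hx.2)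
  rw [abs_le]
  constructor <;> linarith [ramp_nonneg hσ hα.le x]

lemma abs_ramp_sub_midline_le (hσ : 0 ≤ σ) (hα : 0 < α) (hα1 : α ≤ 1) {x : ℝ}
    (hx : x ∈ Set.Icc (-1 : ℝ) 1) : |ramp σ α x - σ * (x + α)| ≤ (1 - α) * σ := by
  rw [abs_le]
  constructor <;>
    linarith [ramp_le_chord hσ hα hα1 hx, mul_sub_kink_le_ramp hσ hα hα1 x]

lemma supNorm_ramp_sub_le_of_best_approx (hσ : 0 ≤ σ) (hα : 0 < α) (hα1 : α ≤ 1) {q : ℝ[X]}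
    (hmin : ∀ r : ℝ[X], r.natDegree ≤ 1 →
      supNorm (fun x => ramp σ α x - q.eval x) ≤ supNorm (fun x => ramp σ α x - r.eval x)) :
    supNorm (fun x => ramp σ α x - q.eval x) ≤ (1 - α) * σ := by
  refine (hmin (C σ * X + C (σ * α)) natDegree_linear_le).trans (supNorm_le fun x hx => ?_)
  simpa [mul_add] using abs_ramp_sub_midline_le hσ hα hα1 hx

lemma eval_neg_one_le_of_approx_ramp (hα : 0 < α) (hα1 : α ≤ 1) {q : ℝ[X]}
    (hq : q.natDegree ≤ 1) (hkink : |ramp σ α (1 - 2 * α) - q.eval (1 - 2 * α)| ≤ (1 - α) * σ)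
    (hone : |ramp σ α 1 - q.eval 1| ≤ (1 - α) * σ) : q.eval (-1) ≤ -((1 - α) * σ) := by
  rw [ramp_kink, abs_le] at hkink
  rw [ramp_one hα, abs_le] at hone
  have hcombo : q.eval (1 - 2 * α) = α * q.eval (-1) + (1 - α) * q.eval 1 := by
    rw [← eval_convex_combo_of_natDegree_le_one hq (add_sub_cancel α 1)]
    congr 1
    ring
  have hone' : (1 - α) * ((1 + α) * σ) ≤ (1 - α) * q.eval 1 :=
    mul_le_mul_of_nonneg_left (by linarith [hone.2]) (sub_nonneg.2 hα1)
  refine le_of_mul_le_mul_left ?_ hα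
  calc α * q.eval (-1) = q.eval (1 - 2 * α) - (1 - α) * q.eval 1 := by rw [hcombo]; ring
    _ ≤ (1 - α) * σ - (1 - α) * ((1 + α) * σ) := by linarith [hkink.1]
    _ = α * -((1 - α) * σ) := by ring

end ramp

theorem linf_projection_lower_bound_general {σ α : ℝ} (hσ : 0 ≤ σ) (hα : 0 < α) (hα1 : α ≤ 1) :
    (∀ x ∈ Set.Icc (-1 : ℝ) 1, |σ - ramp σ α x| ≤ σ) ∧
    ∀ q : ℝ[X], q.natDegree ≤ 1 →
      (∀ r : ℝ[X], r.natDegree ≤ 1 →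
        supNorm (fun x => ramp σ α x - q.eval x) ≤ supNorm (fun x => ramp σ α x - r.eval x)) →
      (2 - α) * σ ≤ supNorm (fun x => σ - q.eval x) := by
  refine ⟨fun x hx => abs_const_sub_ramp_le hσ hα hα1 hx, fun q hq hmin => ?_⟩
  have herr : ∀ x ∈ Set.Icc (-1 : ℝ) 1, |ramp σ α x - q.eval x| ≤ (1 - α) * σ := fun x hx =>
    (abs_le_supNorm (f := fun x => ramp σ α x - q.eval x) (by fun_prop) hx).trans
      (supNorm_ramp_sub_le_of_best_approx hσ hα hα1 hmin)
  have hneg : q.eval (-1) ≤ -((1 - α) * σ) :=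
    eval_neg_one_le_of_approx_ramp hα hα1 hq
      (herr _ ⟨by linarith, by linarith⟩) (herr 1 (by norm_num))
  calc (2 - α) * σ ≤ σ - q.eval (-1) := by linarith
    _ ≤ |σ - q.eval (-1)| := le_abs_self _
    _ ≤ supNorm (fun x => σ - q.eval x) :=
      abs_le_supNorm (f := fun x => σ - q.eval x) (by fun_prop) (by norm_num)

/-- `ℓ∞` projection can be a factor-`(2−α)` away: with `p ≡ σ` and
`f(x) = (σ/α) max(0, x−(1−2α))`, we have `|p − f| ≤ σ` on `[-1,1]`, yet any best `ℓ∞`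
degree-1 approximation `q` of `f` satisfies `‖p − q‖_∞ ≥ (2−α)σ`. -/
theorem linf_projection_lower_bound (σ α : ℝ) (hσ : 0 < σ) (hα0 : 0 < α) (hα1 : α < 1 / 2) :
    (∀ x ∈ Set.Icc (-1 : ℝ) 1,
      |σ - σ / α * max 0 (x - (1 - 2 * α))| ≤ σ) ∧
    ∀ q : Polynomial ℝ, q.natDegree ≤ 1 →
      (∀ r : Polynomial ℝ, r.natDegree ≤ 1 →
        supNorm (fun x => σ / α * max 0 (x - (1 - 2 * α)) - q.eval x) ≤
          supNorm (fun x => σ / α * max 0 (x - (1 - 2 * α)) - r.eval x)) →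
      (2 - α) * σ ≤ supNorm (fun x => σ - q.eval x) :=
  linf_projection_lower_bound_general hσ.le hα0 (by linarith)
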